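/- Let ω be a probability measure on ℝ, let α > 0 and β ∈ ℝ. Then there exists a non-degenerate probability measure μ on ℝ such that for every z in the upper half-plane ℂ⁺, G_μ(z) = 1/(z − β − α·G_ω(z)); equivalently, F_μ(z) = z − β − α/F_ω(z) where F_μ = 1/G_μ. (Note that Im G_ω(z) < 0 for z ∈ ℂ⁺, so the denominator is nonzero.) -/

import Mathlib

open MeasureTheory

noncomputable section

/-- The Cauchy–Stieltjes transform `G_μ(z) = ∫ (z − x)⁻¹ dμ(x)`. -/
def cauchyG (μ : Measure ℝ) (z : ℂ) : ℂ := ∫ x, (z - (x : ℂ))⁻¹ ∂μ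

/-!
Let `σ = α ω` and `b = β`. If `G_σ(z) = ⟪c, (z - A)⁻¹ c⟫` for a self-adjoint operator `A`, then by
the Schur complement `1 / (z - b - G_σ(z))` is the corner entry of the resolvent of the
self-adjoint operator `(s, v) ↦ (b s + ⟪c, v⟫, s c + A v)`, hence the Cauchy transform of its
spectral measure at `(1, 0)`. When `σ` has finite support, `A` can be taken to be a diagonal
matrix. In general, `σ` is a limit of finitely supported measures; the measures obtained for those
have second moment `b² + σ(ℝ)`, so they are tight, and a weak limit point is the measure sought. It
is not a Dirac mass `δ_a`, since `z - b - G_σ(z) = z - a` would make `G_σ(z)` real.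
-/

open Complex Filter Topology

section CauchyKernel

variable {z : ℂ}

lemma sub_ofReal_ne_zero (hz : z.im ≠ 0) (x : ℝ) : z - x ≠ 0 := fun h ↦
  hz <| by simpa using congrArg im h

lemma norm_inv_sub_ofReal_le (hz : z.im ≠ 0) (x : ℝ) : ‖(z - x)⁻¹‖ ≤ |z.im|⁻¹ := by
  rw [norm_inv]
  refine inv_anti₀ (abs_pos.2 hz) ?_
  simpa using abs_im_le_norm (z - x)

lemma continuous_inv_sub_ofReal (hz : z.im ≠ 0) : Continuous fun x : ℝ ↦ (z - x)⁻¹ :=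
  Continuous.inv₀ (by fun_prop) (sub_ofReal_ne_zero hz)

lemma im_inv_sub_ofReal_neg (hz : 0 < z.im) (x : ℝ) : ((z - x)⁻¹).im < 0 := by
  rw [inv_im]
  exact div_neg_of_neg_of_pos (by simpa using hz) (normSq_pos.2 (sub_ofReal_ne_zero hz.ne' x))

lemma integrable_inv_sub_ofReal (hz : z.im ≠ 0) (μ : Measure ℝ) [IsFiniteMeasure μ] :
    Integrable (fun x : ℝ ↦ (z - x)⁻¹) μ :=
  .of_bound (continuous_inv_sub_ofReal hz).aestronglyMeasurable _
    (.of_forall (norm_inv_sub_ofReal_le hz))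

end CauchyKernel

section CauchyTransform

variable {z : ℂ}

lemma cauchyG_dirac (a : ℝ) (z : ℂ) : cauchyG (.dirac a) z = (z - a)⁻¹ :=
  integral_dirac _ a

lemma cauchyG_ofReal_smul {c : ℝ} (hc : 0 ≤ c) (μ : Measure ℝ) (z : ℂ) :
    cauchyG (ENNReal.ofReal c • μ) z = c * cauchyG μ z := by
  rw [cauchyG, integral_smul_measure, ENNReal.toReal_ofReal hc, real_smul, cauchyG]

lemma cauchyG_map {Ω : Type*} [MeasurableSpace Ω] {P : Measure Ω} {X : Ω → ℝ}
    (hX : AEMeasurable X P) (hz : z.im ≠ 0) :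
    cauchyG (P.map X) z = ∫ ω, (z - X ω)⁻¹ ∂P :=
  integral_map hX (continuous_inv_sub_ofReal hz).aestronglyMeasurable

lemma im_cauchyG (hz : z.im ≠ 0) (μ : Measure ℝ) [IsFiniteMeasure μ] :
    (cauchyG μ z).im = ∫ x : ℝ, ((z - x)⁻¹).im ∂μ :=
  (integral_im (integrable_inv_sub_ofReal hz μ)).symm

lemma im_cauchyG_nonpos (hz : 0 < z.im) (μ : Measure ℝ) [IsFiniteMeasure μ] :
    (cauchyG μ z).im ≤ 0 := by
  rw [im_cauchyG hz.ne']
  exact integral_nonpos fun x ↦ (im_inv_sub_ofReal_neg hz x).le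

lemma im_cauchyG_neg (hz : 0 < z.im) (μ : Measure ℝ) [IsFiniteMeasure μ] [NeZero μ] :
    (cauchyG μ z).im < 0 := by
  have hsupp : Function.support (fun x : ℝ ↦ -((z - x)⁻¹).im) = Set.univ :=
    Set.eq_univ_of_forall fun x ↦ (neg_pos.2 (im_inv_sub_ofReal_neg hz x)).ne'
  have hpos : 0 < ∫ x : ℝ, -((z - x)⁻¹).im ∂μ := by
    rw [integral_pos_iff_support_of_nonneg
      (fun x ↦ (neg_pos.2 (im_inv_sub_ofReal_neg hz x)).le)
      (integrable_inv_sub_ofReal hz.ne' μ).im.neg, hsupp]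
    exact Measure.measure_univ_pos.2 (NeZero.ne μ)
  rwa [integral_neg, ← im_cauchyG hz.ne', neg_pos] at hpos

lemma sub_sub_cauchyG_ne_zero (hz : 0 < z.im) (b : ℝ) (σ : Measure ℝ) [IsFiniteMeasure σ] :
    z - b - cauchyG σ z ≠ 0 := fun h ↦ by
  have him : z.im - (cauchyG σ z).im = 0 := by simpa using congrArg im h
  linarith [im_cauchyG_nonpos hz σ]

lemma ne_dirac_of_cauchyG_eq {μ σ : Measure ℝ} [IsFiniteMeasure σ] [NeZero σ] {b : ℝ}
    (hz : 0 < z.im) (h : cauchyG μ z = 1 / (z - b - cauchyG σ z)) (a : ℝ) :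
    μ ≠ .dirac a := by
  rintro rfl
  rw [cauchyG_dirac, one_div, inv_inj] at h
  have him : z.im = z.im - (cauchyG σ z).im := by simpa using congrArg im h
  linarith [im_cauchyG_neg hz σ]

lemma tendsto_cauchyG {ι : Type*} {l : Filter ι} {ν : ι → ProbabilityMeasure ℝ}
    {μ : ProbabilityMeasure ℝ} (h : Tendsto ν l (𝓝 μ)) (hz : z.im ≠ 0) :
    Tendsto (fun i ↦ cauchyG (ν i) z) l (𝓝 (cauchyG μ z)) :=
  (ProbabilityMeasure.tendsto_iff_forall_integral_rclike_tendsto ℂ).1 h <|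
    .ofNormedAddCommGroup _ (continuous_inv_sub_ofReal hz) _ (norm_inv_sub_ofReal_le hz)

lemma tendsto_cauchyG_map {Ω : Type*} [MeasurableSpace Ω] {P : Measure Ω} [IsFiniteMeasure P]
    {X : ℕ → Ω → ℝ} {Y : Ω → ℝ} (hX : ∀ n, AEMeasurable (X n) P) (hY : AEMeasurable Y P)
    (h : ∀ᵐ ω ∂P, Tendsto (X · ω) atTop (𝓝 (Y ω))) (hz : z.im ≠ 0) :
    Tendsto (fun n ↦ cauchyG (P.map (X n)) z) atTop (𝓝 (cauchyG (P.map Y) z)) := by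
  have hcont := continuous_inv_sub_ofReal hz
  simp only [cauchyG_map (hX _) hz, cauchyG_map hY hz]
  refine tendsto_integral_of_dominated_convergence (fun _ ↦ |z.im|⁻¹)
    (fun n ↦ (hcont.measurable.comp_aemeasurable (hX n)).aestronglyMeasurable)
    (integrable_const _) (fun n ↦ .of_forall fun ω ↦ norm_inv_sub_ofReal_le hz _) ?_
  filter_upwards [h] with ω hω using (hcont.tendsto _).comp hω

end CauchyTransform

section SpectralMeasure

variable {𝕜 E : Type*} [RCLike 𝕜] [NormedAddCommGroup E] [InnerProductSpace 𝕜 E]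

lemma sum_enorm_sq_inner {ι : Type*} [Fintype ι] (b : OrthonormalBasis ι 𝕜 E) (v : E) :
    ∑ i, ‖inner 𝕜 (b i) v‖ₑ ^ 2 = ‖v‖ₑ ^ 2 := by
  simp only [← ofReal_norm, ← ENNReal.ofReal_pow (norm_nonneg _)]
  rw [← b.sum_sq_norm_inner_right v, ENNReal.ofReal_sum_of_nonneg fun _ _ ↦ by positivity]

variable [FiniteDimensional 𝕜 E] {T : E →ₗ[𝕜] E}

/-- The spectral measure at the vector `e` of a symmetric operator on a finite-dimensional space:
the mass of each eigenvalue is the squared norm of the projection of `e` onto its eigenspace. -/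
def spectralMeasure (hT : T.IsSymmetric) (e : E) : Measure ℝ :=
  ∑ i, ‖inner 𝕜 (hT.eigenvectorBasis rfl i) e‖ₑ ^ 2 • .dirac (hT.eigenvalues rfl i)

lemma inner_eigenvectorBasis_apply (hT : T.IsSymmetric) (i : Fin (Module.finrank 𝕜 E)) (v : E) :
    inner 𝕜 (hT.eigenvectorBasis rfl i) (T v) =
      hT.eigenvalues rfl i * inner 𝕜 (hT.eigenvectorBasis rfl i) v := by
  rw [← hT, hT.apply_eigenvectorBasis, inner_smul_left, RCLike.conj_ofReal]

lemma spectralMeasure_univ (hT : T.IsSymmetric) (e : E) :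
    spectralMeasure hT e Set.univ = ‖e‖ₑ ^ 2 := by
  simp only [spectralMeasure, Measure.finsetSum_apply, Measure.smul_apply, measure_univ,
    smul_eq_mul, mul_one, sum_enorm_sq_inner]

lemma lintegral_enorm_sq_spectralMeasure (hT : T.IsSymmetric) (e : E) :
    ∫⁻ x, ‖x‖ₑ ^ 2 ∂spectralMeasure hT e = ‖T e‖ₑ ^ 2 := by
  rw [spectralMeasure, lintegral_finsetSum_measure,
    ← sum_enorm_sq_inner (hT.eigenvectorBasis rfl)]
  refine Finset.sum_congr rfl fun i _ ↦ ?_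
  rw [lintegral_smul_measure, lintegral_dirac, inner_eigenvectorBasis_apply, enorm_mul,
    ← ofReal_norm (hT.eigenvalues rfl i : 𝕜), RCLike.norm_ofReal, ← Real.enorm_eq_ofReal_abs,
    mul_pow, smul_eq_mul, mul_comm]

lemma integral_spectralMeasure {F : Type*} [NormedAddCommGroup F] [NormedSpace ℝ F]
    [CompleteSpace F] (hT : T.IsSymmetric) (e : E) (f : ℝ → F) :
    ∫ x, f x ∂spectralMeasure hT e =
      ∑ i, ‖inner 𝕜 (hT.eigenvectorBasis rfl i) e‖ ^ 2 • f (hT.eigenvalues rfl i) := by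
  have hint (i : Fin (Module.finrank 𝕜 E)) : Integrable f
      (‖inner 𝕜 (hT.eigenvectorBasis rfl i) e‖ₑ ^ 2 • .dirac (hT.eigenvalues rfl i)) :=
    (integrable_dirac (by simp)).smul_measure (by simp)
  rw [spectralMeasure, integral_finsetSum_measure fun i _ ↦ hint i]
  simp only [integral_smul_measure, integral_dirac, ENNReal.toReal_pow, toReal_enorm]

end SpectralMeasure

lemma cauchyG_spectralMeasure {E : Type*} [NormedAddCommGroup E] [InnerProductSpace ℂ E]
    [FiniteDimensional ℂ E] {T : E →ₗ[ℂ] E} (hT : T.IsSymmetric) {e v : E} {z : ℂ}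
    (hz : z.im ≠ 0) (hv : z • v - T v = e) :
    cauchyG (spectralMeasure hT e) z = inner ℂ e v := by
  let b := hT.eigenvectorBasis rfl
  let eig := hT.eigenvalues rfl
  have hcoord (i) : inner ℂ (b i) v = (z - eig i)⁻¹ * inner ℂ (b i) e := by
    rw [← hv, inner_sub_right, inner_smul_right, inner_eigenvectorBasis_apply, ← sub_mul]
    exact (inv_mul_cancel_left₀ (sub_ofReal_ne_zero hz _) _).symm
  calc cauchyG (spectralMeasure hT e) z
    _ = ∑ i, ‖inner ℂ (b i) e‖ ^ 2 • (z - eig i)⁻¹ := integral_spectralMeasure hT e _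
    _ = ∑ i, inner ℂ e (b i) * inner ℂ (b i) v := by
      refine Finset.sum_congr rfl fun i _ ↦ ?_
      rw [hcoord, mul_left_comm, ← inner_conj_symm e, conj_mul', real_smul, ofReal_pow, mul_comm]
    _ = inner ℂ e v := b.sum_inner_mul_inner e v

lemma enorm_sq_toLp_prod {E F : Type*} [SeminormedAddCommGroup E] [SeminormedAddCommGroup F]
    (x : E) (y : F) : ‖WithLp.toLp 2 (x, y)‖ₑ ^ 2 = ‖x‖ₑ ^ 2 + ‖y‖ₑ ^ 2 := by
  simp only [← ofReal_norm, ← ENNReal.ofReal_pow (norm_nonneg _)]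
  rw [WithLp.prod_norm_sq_eq_of_L2, ENNReal.ofReal_add (by positivity) (by positivity)]
  rfl

section BorderedOperator

variable {𝕜 E : Type*} [RCLike 𝕜] [NormedAddCommGroup E] [InnerProductSpace 𝕜 E]

/-- The operator with block matrix `!![b, ⟪c, ·⟫; c, A]` on the Hilbert sum `𝕜 ⊕ E`. -/
def borderedOperator (b : ℝ) (c : E) (A : E →ₗ[𝕜] E) :
    WithLp 2 (𝕜 × E) →ₗ[𝕜] WithLp 2 (𝕜 × E) :=
  (WithLp.linearEquiv 2 𝕜 (𝕜 × E)).symm.toLinearMap ∘ₗ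
    ((b : 𝕜) • WithLp.fstₗ 2 𝕜 𝕜 E + innerₛₗ 𝕜 c ∘ₗ WithLp.sndₗ 2 𝕜 𝕜 E).prod
      ((WithLp.fstₗ 2 𝕜 𝕜 E).smulRight c + A ∘ₗ WithLp.sndₗ 2 𝕜 𝕜 E)

lemma borderedOperator_apply (b : ℝ) (c : E) (A : E →ₗ[𝕜] E) (x : WithLp 2 (𝕜 × E)) :
    borderedOperator b c A x = .toLp 2 (b * x.fst + inner 𝕜 c x.snd, x.fst • c + A x.snd) :=
  rfl

lemma borderedOperator_isSymmetric (b : ℝ) (c : E) {A : E →ₗ[𝕜] E} (hA : A.IsSymmetric) :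
    (borderedOperator b c A).IsSymmetric := by
  intro x y
  simp only [borderedOperator_apply, WithLp.prod_inner_apply, RCLike.inner_apply, map_add, map_mul,
    RCLike.conj_ofReal, inner_conj_symm, inner_add_left, inner_add_right, inner_smul_left,
    inner_smul_right, hA x.snd y.snd, WithLp.ofLp_fst, WithLp.ofLp_snd]
  ring

lemma borderedOperator_apply_one_zero (b : ℝ) (c : E) (A : E →ₗ[𝕜] E) :
    borderedOperator b c A (.toLp 2 (1, 0)) = .toLp 2 ((b : 𝕜), c) := by
  simp [borderedOperator_apply]

lemma smul_sub_borderedOperator_apply (b : ℝ) (c v : E) (A : E →ₗ[𝕜] E) {z s : 𝕜}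
    (hv : z • v - A v = c) (hs : s * (z - b - inner 𝕜 c v) = 1) :
    z • .toLp 2 (s, s • v) - borderedOperator b c A (.toLp 2 (s, s • v)) = .toLp 2 (1, 0) := by
  refine WithLp.ofLp_injective 2 (Prod.ext ?_ ?_)
  · simp only [borderedOperator_apply, WithLp.toLp_fst, WithLp.toLp_snd, inner_smul_right, map_smul,
      WithLp.ofLp_sub, WithLp.ofLp_smul, Prod.smul_mk, smul_eq_mul, Prod.mk_sub_mk]
    linear_combination hs
  · simp only [borderedOperator_apply, WithLp.toLp_fst, WithLp.toLp_snd, map_smul,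
      WithLp.ofLp_sub, WithLp.ofLp_smul, Prod.smul_mk, smul_eq_mul, Prod.mk_sub_mk]
    rw [← hv]
    module

end BorderedOperator

lemma cauchyG_spectralMeasure_borderedOperator {E : Type*} [NormedAddCommGroup E]
    [InnerProductSpace ℂ E] [FiniteDimensional ℂ E] (b : ℝ) {c v : E} {A : E →ₗ[ℂ] E}
    (hA : A.IsSymmetric) {z : ℂ} (hz : z.im ≠ 0) (hv : z • v - A v = c)
    (hne : z - b - inner ℂ c v ≠ 0) :
    cauchyG (spectralMeasure (borderedOperator_isSymmetric b c hA) (.toLp 2 (1, 0))) z =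
      1 / (z - b - inner ℂ c v) := by
  have hs : 1 / (z - b - inner ℂ c v) * (z - b - inner ℂ c v) = 1 := one_div_mul_cancel hne
  rw [cauchyG_spectralMeasure _ hz (smul_sub_borderedOperator_apply b c v A hv hs)]
  simp

section FiniteSupport

variable {σ : Measure ℝ} [IsFiniteMeasure σ] {s : Finset ℝ}

lemma cauchyG_eq_sum (hs : ∀ᵐ x ∂σ, x ∈ s) {z : ℂ} (hz : z.im ≠ 0) :
    cauchyG σ z = ∑ x : s, σ.real {x.1} * (z - x)⁻¹ := by
  have hrestr : σ.restrict s = σ := Measure.restrict_eq_self_of_ae_mem hs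
  rw [cauchyG, ← hrestr, setIntegral_finset s (integrable_inv_sub_ofReal hz σ).integrableOn,
    hrestr, ← Finset.sum_coe_sort]
  simp only [real_smul]

lemma exists_isSymmetric_inner_eq_cauchyG (hs : ∀ᵐ x ∂σ, x ∈ s) :
    ∃ (A : EuclideanSpace ℂ s →ₗ[ℂ] EuclideanSpace ℂ s) (c : EuclideanSpace ℂ s),
      A.IsSymmetric ∧ ‖c‖ₑ ^ 2 = σ Set.univ ∧
        ∀ z : ℂ, z.im ≠ 0 → ∃ v, z • v - A v = c ∧ inner ℂ c v = cauchyG σ z := by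
  let A : EuclideanSpace ℂ s →ₗ[ℂ] EuclideanSpace ℂ s :=
    Matrix.toEuclideanLin (Matrix.diagonal fun x ↦ (x : ℂ))
  have hA : A.IsSymmetric :=
    Matrix.isSymmetric_toEuclideanLin_iff.2 <|
      Matrix.isHermitian_diagonal_iff.2 fun x ↦ conj_ofReal x
  let c : EuclideanSpace ℂ s := .toLp 2 fun x ↦ (√(σ.real {x.1}) : ℂ)
  have hc : ‖c‖ₑ ^ 2 = σ Set.univ := by
    rw [← sum_enorm_sq_inner (EuclideanSpace.basisFun s ℂ)]
    calc ∑ x, ‖inner ℂ (EuclideanSpace.basisFun s ℂ x) c‖ₑ ^ 2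
      _ = ∑ x : s, σ {x.1} := by
        refine Finset.sum_congr rfl fun x _ ↦ ?_
        rw [EuclideanSpace.basisFun_inner, ← ofReal_norm, norm_real,
          Real.norm_of_nonneg (Real.sqrt_nonneg _), ← ENNReal.ofReal_pow (Real.sqrt_nonneg _),
          Real.sq_sqrt measureReal_nonneg, ofReal_measureReal]
      _ = σ.restrict s Set.univ := by
        rw [Finset.sum_coe_sort s (fun x ↦ σ {x}), sum_measure_singleton,
          Measure.restrict_apply_univ]
      _ = σ Set.univ := by rw [Measure.restrict_eq_self_of_ae_mem hs]
  refine ⟨A, c, hA, hc, fun z hz ↦ ⟨.toLp 2 fun x ↦ (z - x)⁻¹ * c x, ?_, ?_⟩⟩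
  · ext x
    calc z * ((z - x)⁻¹ * c x) - A (.toLp 2 fun x ↦ (z - x)⁻¹ * c x) x
      _ = z * ((z - x)⁻¹ * c x) - x * ((z - x)⁻¹ * c x) := by
        simp only [A, Matrix.toLpLin_apply, Matrix.mulVec_diagonal]
      _ = c x := by
        rw [← sub_mul, mul_inv_cancel_left₀ (sub_ofReal_ne_zero hz x)]
  · rw [cauchyG_eq_sum hs hz, PiLp.inner_apply]
    refine Finset.sum_congr rfl fun x _ ↦ ?_
    have hcx : (√(σ.real {x.1}) : ℂ) ^ 2 = σ.real {x.1} := by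
      exact_mod_cast Real.sq_sqrt measureReal_nonneg
    simp only [c, RCLike.inner_apply, conj_ofReal]
    linear_combination (z - x)⁻¹ * hcx

lemma exists_cauchyG_eq_of_finite_support (hs : ∀ᵐ x ∂σ, x ∈ s) (b : ℝ) :
    ∃ μ : Measure ℝ, IsProbabilityMeasure μ ∧
      (∀ z : ℂ, 0 < z.im → cauchyG μ z = 1 / (z - b - cauchyG σ z)) ∧
      ∫⁻ x, ‖x‖ₑ ^ 2 ∂μ = ‖b‖ₑ ^ 2 + σ Set.univ := by
  obtain ⟨A, c, hA, hc, hv⟩ := exists_isSymmetric_inner_eq_cauchyG hs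
  refine ⟨spectralMeasure (borderedOperator_isSymmetric b c hA) (.toLp 2 (1, 0)), ⟨?_⟩, ?_, ?_⟩
  · simp [spectralMeasure_univ, enorm_sq_toLp_prod]
  · intro z hz
    obtain ⟨v, hv, hcv⟩ := hv z hz.ne'
    have hne := sub_sub_cauchyG_ne_zero hz b σ
    rw [← hcv] at hne ⊢
    exact cauchyG_spectralMeasure_borderedOperator b hA hz.ne' hv hne
  · rw [lintegral_enorm_sq_spectralMeasure, borderedOperator_apply_one_zero, enorm_sq_toLp_prod, hc,
      ← ofReal_norm, RCLike.norm_ofReal, ← Real.enorm_eq_ofReal_abs]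

end FiniteSupport

section Tightness

variable {E : Type*} [NormedAddCommGroup E] [ProperSpace E] [MeasurableSpace E]

lemma isTightMeasureSet_of_lintegral_enorm_rpow_le [OpensMeasurableSpace E] {S : Set (Measure E)}
    {p : ℝ} (hp : 0 < p) {C : ENNReal} (hC : C ≠ ⊤) (hS : ∀ μ ∈ S, ∫⁻ x, ‖x‖ₑ ^ p ∂μ ≤ C) :
    IsTightMeasureSet S := by
  have hlim : Tendsto (fun r : ℝ ↦ C / ENNReal.ofReal r ^ p) atTop (𝓝 0) := by
    have hpow : Tendsto (fun r : ℝ ↦ ENNReal.ofReal r ^ p) atTop (𝓝 ⊤) := by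
      simpa [hp] using ENNReal.tendsto_ofReal_atTop.ennrpow_const p
    simpa using ENNReal.Tendsto.const_div hpow (Or.inr hC)
  refine isTightMeasureSet_of_tendsto_measure_norm_gt <|
    tendsto_of_tendsto_of_tendsto_of_le_of_le' tendsto_const_nhds hlim
      (.of_forall fun _ ↦ zero_le) ?_
  filter_upwards [eventually_gt_atTop 0] with r hr
  refine iSup₂_le fun μ hμ ↦ ?_
  calc μ {x | r < ‖x‖}
    _ ≤ μ {x | ENNReal.ofReal r ^ p ≤ ‖x‖ₑ ^ p} := by
      refine measure_mono fun x (hx : r < ‖x‖) ↦ ?_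
      rw [Set.mem_ofPred_eq, ← ofReal_norm]
      gcongr
    _ ≤ (∫⁻ x, ‖x‖ₑ ^ p ∂μ) / ENNReal.ofReal r ^ p :=
      meas_ge_le_lintegral_div (by fun_prop) (by simp [hr, hp]) (by simp [hp.le])
    _ ≤ C / ENNReal.ofReal r ^ p := by gcongr; exact hS μ hμ

lemma exists_subseq_tendsto_of_lintegral_enorm_rpow_le [BorelSpace E]
    {p : ℝ} (hp : 0 < p) {C : ENNReal} (hC : C ≠ ⊤) {ν : ℕ → ProbabilityMeasure E}
    (hν : ∀ n, ∫⁻ x, ‖x‖ₑ ^ p ∂(ν n : Measure E) ≤ C) :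
    ∃ (μ : ProbabilityMeasure E) (φ : ℕ → ℕ), StrictMono φ ∧ Tendsto (ν ∘ φ) atTop (𝓝 μ) := by
  have htight : IsTightMeasureSet {(μ : Measure E) | μ ∈ Set.range ν} :=
    isTightMeasureSet_of_lintegral_enorm_rpow_le hp hC <| by
      rintro _ ⟨_, ⟨n, rfl⟩, rfl⟩
      exact hν n
  obtain ⟨μ, -, φ, hφ, hlim⟩ := (isCompact_closure_of_isTightMeasureSet htight).tendsto_subseq
    fun n ↦ subset_closure (Set.mem_range_self n)
  exact ⟨μ, φ, hφ, hlim⟩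

end Tightness

lemma exists_cauchyG_eq (σ : Measure ℝ) [IsFiniteMeasure σ] (b : ℝ) :
    ∃ μ : Measure ℝ, IsProbabilityMeasure μ ∧
      ∀ z : ℂ, 0 < z.im → cauchyG μ z = 1 / (z - b - cauchyG σ z) := by
  have hid : StronglyMeasurable (id : ℝ → ℝ) := stronglyMeasurable_id
  let σ' (n : ℕ) : Measure ℝ := σ.map (hid.approx n)
  have hσ' {z : ℂ} (hz : 0 < z.im) :
      Tendsto (fun n ↦ cauchyG (σ' n) z) atTop (𝓝 (cauchyG σ z)) := by
    simpa only [Measure.map_id] using tendsto_cauchyG_map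
      (fun n ↦ (hid.approx n).aemeasurable) aemeasurable_id (.of_forall hid.tendsto_approx) hz.ne'
  have hfinite (n : ℕ) : ∀ᵐ x ∂σ' n, x ∈ (hid.approx n).range :=
    (ae_map_iff (hid.approx n).aemeasurable (Finset.measurableSet _)).2
      (.of_forall fun t ↦ (hid.approx n).mem_range_self t)
  choose ν hν hνG hν2 using fun n ↦ exists_cauchyG_eq_of_finite_support (hfinite n) b
  obtain ⟨μ, φ, hφ, hμ⟩ := exists_subseq_tendsto_of_lintegral_enorm_rpow_le two_pos
    (C := ‖b‖ₑ ^ 2 + σ Set.univ) (by finiteness) (ν := fun n ↦ ⟨ν n, hν n⟩) fun n ↦ by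
      simp [hν2, σ', Measure.map_apply (hid.approx n).measurable]
  refine ⟨μ, inferInstance, fun z hz ↦ tendsto_nhds_unique (tendsto_cauchyG hμ hz.ne') ?_⟩
  refine .congr (fun n ↦ (hνG (φ n) z hz).symm) ?_
  exact tendsto_const_nhds.div (tendsto_const_nhds.sub ((hσ' hz).comp hφ.tendsto_atTop))
    (sub_sub_cauchyG_ne_zero hz b σ)

/-- For any probability measure `ω`, `α > 0` and `β ∈ ℝ`, there is a non-degenerate
probability measure `μ` with `G_μ(z) = 1/(z − β − α·G_ω(z))` on the upper half-plane. -/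
theorem exists_measure_F_transform (ω : Measure ℝ) (hω : IsProbabilityMeasure ω)
    (α β : ℝ) (hα : 0 < α) :
    ∃ μ : Measure ℝ, IsProbabilityMeasure μ ∧ (∀ a : ℝ, μ ≠ Measure.dirac a) ∧
      ∀ z : ℂ, 0 < z.im →
        cauchyG μ z = 1 / (z - (β : ℂ) - (α : ℂ) * cauchyG ω z) := by
  let σ : Measure ℝ := ENNReal.ofReal α • ω
  have : IsFiniteMeasure σ := ω.smul_finite ENNReal.ofReal_ne_top
  have : NeZero σ := ⟨by simpa [σ] using ⟨hα, NeZero.ne ω⟩⟩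
  obtain ⟨μ, hμ, hG⟩ := exists_cauchyG_eq σ β
  refine ⟨μ, hμ, ne_dirac_of_cauchyG_eq (z := I) (by simp) (hG I (by simp)), fun z hz ↦ ?_⟩
  rw [hG z hz, cauchyG_ofReal_smul hα.le]
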